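/- Let β > 0, p > 1, and τ = n − βp > 0. Then there is C = C(n, p, β) such that for every g in the Lorentz space L^{p,1}(ℝⁿ), ∫₀^∞ H^τ_∞({x : M(I_β g)(x) ≥ t^{1/p}}) dt ≤ C ‖g‖_{L^{p,1}}^p. -/

import Mathlib

open MeasureTheory Metric Set
open scoped ENNReal NNReal

/-- `τ`-dimensional Hausdorff content. -/
noncomputable def hContent {X : Type*} [EMetricSpace X] (τ : ℝ) (S : Set X) : ℝ≥0∞ :=
  ⨅ (c : ℕ → Set X) (_ : S ⊆ ⋃ i, c i), ∑' i, EMetric.diam (c i) ^ τ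

/-- The Hardy–Littlewood maximal function. -/
noncomputable def maxFn {n : ℕ} (f : EuclideanSpace ℝ (Fin n) → ℝ≥0∞)
    (x : EuclideanSpace ℝ (Fin n)) : ℝ≥0∞ :=
  ⨆ (r : ℝ) (_ : 0 < r), (∫⁻ y in Metric.ball x r, f y) / volume (Metric.ball x r)

/-- The Riesz potential `I_β g(x) = ∫ g(y) / |y - x|^{n-β} dy`. -/
noncomputable def rieszPot {n : ℕ} (β : ℝ) (g : EuclideanSpace ℝ (Fin n) → ℝ)
    (x : EuclideanSpace ℝ (Fin n)) : ℝ :=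
  ∫ y, g y / ‖y - x‖ ^ ((n : ℝ) - β)

/-- The Lorentz `L^{p,1}` norm, `‖f‖_{L^{p,1}} = ∫₀^∞ (L^n {|f| > t})^{1/p} dt`. -/
noncomputable def lorentzNorm {n : ℕ} (p : ℝ) (f : EuclideanSpace ℝ (Fin n) → ℝ) : ℝ≥0∞ :=
  ∫⁻ t in Set.Ioi (0 : ℝ), (volume {x | t < |f x|}) ^ (1 / p)

/-!
The averages of the kernel `|y - ·|^{β-n}` over balls centred at `x` are at most a constant times
`|y - x|^{β-n}`, so `M(I_β g)` is dominated pointwise by the Riesz potential of `|g|`. Since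
`|g| ≤ ∑_j 2^{j+1} 1_{E_j}` with `E_j = {|g| > 2^j}`, it suffices to control the potentials of the
sets `E_j`, which are dominated by the dyadic sums `∑_Q ℓ(Q)^{β-n} |E_j ∩ 3Q| 1_Q`.

Telescoping the `p`-th powers of the partial sums over large cubes dominates the `p`-th power of
such a sum by `∑_Q c_Q 1_Q`. The sum may be stopped at the cubes where the partial sum over the
ancestors of `Q` exceeds a multiple of `ℓ(Q)^β`, because the smaller cubes contribute at most
`ℓ(Q)^β` in total; this truncation gives `∑_Q c_Q ℓ(Q)^τ ≲ |E_j|`. Jensen's inequality recombines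
the levels into a single dyadic sum of cost at most a multiple of
`(∑_j 2^j |E_j|^{1/p})^p ≲ ‖g‖_{L^{p,1}}^p`.

Finally, the Choquet integral of `∑_Q c_Q 1_Q` is at most a multiple of its cost: the superlevel set
at height `t` is covered by the cubes at which the sum over ancestors first exceeds `t`, and `Q` is
one of these only for `t` in an interval of length `c_Q`.
-/

open Filter Topology

section TwoPowers

lemma two_rpow_add (a b : ℝ) : (2 : ℝ≥0∞) ^ (a + b) = 2 ^ a * 2 ^ b :=
  ENNReal.rpow_add _ _ two_ne_zero ENNReal.ofNat_ne_top

lemma two_rpow_ne_zero (a : ℝ) : (2 : ℝ≥0∞) ^ a ≠ 0 :=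
  (ENNReal.rpow_pos two_pos ENNReal.ofNat_ne_top).ne'

lemma two_rpow_ne_top (a : ℝ) : (2 : ℝ≥0∞) ^ a ≠ ⊤ := by simp

lemma two_rpow_intCast (k : ℤ) : (2 : ℝ≥0∞) ^ (k : ℝ) = ENNReal.ofReal (2 ^ k) := by
  rw [← Real.rpow_intCast, ← ENNReal.ofReal_rpow_of_pos two_pos, ENNReal.ofReal_ofNat]

lemma two_rpow_neg_lt_one {s : ℝ} (hs : 0 < s) : (2 : ℝ≥0∞) ^ (-s) < 1 :=
  ENNReal.rpow_lt_one_of_one_lt_of_neg ENNReal.one_lt_two (neg_lt_zero.2 hs)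

lemma two_rpow_neg_natCast_mul (i : ℕ) (s : ℝ) :
    (2 : ℝ≥0∞) ^ (-(i * s)) = ((2 : ℝ≥0∞) ^ (-s)) ^ i := by
  rw [← ENNReal.rpow_mul_natCast]
  ring_nf

lemma tsum_two_rpow_neg_mul_ne_top {s : ℝ} (hs : 0 < s) :
    ∑' i : ℕ, (2 : ℝ≥0∞) ^ (-(i * s)) ≠ ⊤ := by
  simp_rw [two_rpow_neg_natCast_mul, ENNReal.tsum_geometric]
  exact ENNReal.inv_ne_top.2 (tsub_pos_of_lt (two_rpow_neg_lt_one hs)).ne'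

lemma exists_two_rpow_mul_lt {β : ℝ} (hβ : 0 < β) {ε : ℝ≥0∞} (hε : ε ≠ 0) (K : ℤ) :
    ∃ k ≤ K, (2 : ℝ≥0∞) ^ (k * β) < ε := by
  have tendsto_zero : Tendsto (fun i : ℕ ↦ (2 : ℝ≥0∞) ^ (-(i * β))) atTop (𝓝 0) := by
    simp_rw [two_rpow_neg_natCast_mul]
    exact ENNReal.tendsto_pow_atTop_nhds_zero_of_lt_one (two_rpow_neg_lt_one hβ)
  obtain ⟨i, hi, hiK⟩ := ((tendsto_zero.eventually_lt_const (pos_iff_ne_zero.2 hε)).and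
    (eventually_ge_atTop (-K).toNat)).exists
  refine ⟨-i, by omega, ?_⟩
  simpa using hi

end TwoPowers

section TailSums

/-- The tail `∑_{j ≥ k} u j` of a two-sided series, indexed by the distance `j - k`. -/
noncomputable def tailSum (u : ℤ → ℝ≥0∞) (k : ℤ) : ℝ≥0∞ := ∑' i : ℕ, u (k + i)

variable (u : ℤ → ℝ≥0∞)

lemma tailSum_eq_add_tailSum (k : ℤ) : tailSum u k = u k + tailSum u (k + 1) := by
  rw [tailSum, tsum_eq_zero_add' ENNReal.summable, tailSum]
  push_cast
  simp only [add_zero, add_assoc, add_comm (1 : ℤ)]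

lemma antitone_tailSum : Antitone (tailSum u) :=
  antitone_int_of_succ_le fun k ↦ by
    rw [tailSum_eq_add_tailSum u k]
    exact le_add_self

lemma tailSum_mono {u v : ℤ → ℝ≥0∞} {k : ℤ} (h : ∀ j, k ≤ j → u j ≤ v j) :
    tailSum u k ≤ tailSum v k :=
  ENNReal.tsum_le_tsum fun i ↦ h _ (by omega)

lemma tsum_eq_tailSum_add (K : ℤ) : ∑' k, u k = tailSum u K + ∑' i : ℕ, u (K - (i + 1)) := by
  rw [← (Equiv.addLeft K).tsum_eq u,
    tsum_of_nat_of_neg_add_one ENNReal.summable ENNReal.summable]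
  simp only [Equiv.coe_addLeft, tailSum, ← sub_eq_add_neg]

lemma tailSum_le_tsum (k : ℤ) : tailSum u k ≤ ∑' j, u j :=
  le_self_add.trans_eq (tsum_eq_tailSum_add u k).symm

lemma sum_le_tailSum {s : Finset ℤ} {k : ℤ} (hk : ∀ j ∈ s, k ≤ j) : ∑ j ∈ s, u j ≤ tailSum u k := by
  have tsum_indicator : ∑' j, (Ici k).indicator u j = tailSum u k := by
    rw [tsum_eq_tailSum_add _ k, tailSum, tailSum]
    simp [indicator, not_lt.2]
  calc ∑ j ∈ s, u j = ∑ j ∈ s, (Ici k).indicator u j :=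
        Finset.sum_congr rfl fun j hj ↦ (indicator_of_mem (mem_Ici.2 (hk j hj)) u).symm
    _ ≤ tailSum u k := (ENNReal.sum_le_tsum s).trans_eq tsum_indicator

lemma exists_lt_tailSum {t : ℝ≥0∞} (ht : t < ∑' k, u k) : ∃ k, t < tailSum u k := by
  rw [ENNReal.tsum_eq_iSup_sum] at ht
  obtain ⟨s, hs⟩ := lt_iSup_iff.1 ht
  obtain ⟨k, hk⟩ := s.bddBelow
  exact ⟨k, hs.trans_le (sum_le_tailSum u fun _ hj ↦ hk hj)⟩

variable {u}

lemma tsum_le_of_forall_tailSum_le {B : ℝ≥0∞} (h : ∀ k, tailSum u k ≤ B) : ∑' k, u k ≤ B :=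
  le_of_forall_lt fun _ ht ↦ (exists_lt_tailSum u ht).elim fun k hk ↦ hk.trans_le (h k)

lemma tendsto_tailSum {K : ℤ} (hK : tailSum u K ≠ ⊤) : Tendsto (tailSum u) atTop (𝓝 0) := by
  have tendsto_nat : Tendsto (fun N : ℕ ↦ tailSum u (K + N)) atTop (𝓝 0) := by
    convert ENNReal.tendsto_sum_nat_add _ hK using 2 with N
    rw [tailSum]
    push_cast
    ring_nf
  refine ENNReal.tendsto_nhds_zero.2 fun ε hε ↦ ?_
  obtain ⟨N, hN⟩ := (ENNReal.tendsto_nhds_zero.1 tendsto_nat ε hε).exists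
  filter_upwards [eventually_ge_atTop (K + N)] with k hk
  exact (antitone_tailSum u hk).trans hN

lemma tailSum_ne_top_of_le_two_rpow {A : ℝ≥0∞} (hA : A ≠ ⊤) {s : ℝ} (hs : 0 < s)
    (hu : ∀ k : ℤ, u k ≤ A * 2 ^ (-(k * s))) (K : ℤ) : tailSum u K ≠ ⊤ := by
  have geometric : tailSum u K ≤ A * 2 ^ (-(K * s)) * ∑' i : ℕ, (2 : ℝ≥0∞) ^ (-(i * s)) := by
    rw [← ENNReal.tsum_mul_left]
    refine ENNReal.tsum_le_tsum fun i ↦ (hu _).trans_eq ?_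
    rw [mul_assoc, ← two_rpow_add]
    push_cast
    ring_nf
  exact ne_top_of_le_ne_top (ENNReal.mul_ne_top (ENNReal.mul_ne_top hA (two_rpow_ne_top _))
    (tsum_two_rpow_neg_mul_ne_top hs)) geometric

lemma tsum_le_tailSum_add_of_le_two_rpow {A : ℝ≥0∞} {β : ℝ} (hβ : 0 ≤ β)
    (hu : ∀ k : ℤ, u k ≤ A * 2 ^ (k * β)) (K : ℤ) :
    ∑' k, u k ≤ tailSum u K + A * (∑' i : ℕ, 2 ^ (-(i * β))) * 2 ^ (K * β) := by
  rw [tsum_eq_tailSum_add u K, mul_right_comm, ← ENNReal.tsum_mul_left]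
  gcongr with i
  calc u (K - (i + 1)) ≤ A * 2 ^ ((K - (i + 1) : ℤ) * β) := hu _
    _ ≤ A * 2 ^ (K * β + -(i * β)) := by
        gcongr
        · exact one_le_two
        · push_cast
          linarith
    _ = A * 2 ^ (K * β) * 2 ^ (-(i * β)) := by rw [two_rpow_add, mul_assoc]

lemma exists_last_of_eventually_not {P : ℤ → Prop} (hP : ∃ k, P k) (hnot : ∀ᶠ k in atTop, ¬P k) :
    ∃ K, P K ∧ ∀ k, K < k → ¬P k := by
  obtain ⟨N, hN⟩ := eventually_atTop.1 hnot
  obtain ⟨K, hK, hle⟩ := Int.exists_greatest_of_bdd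
    ⟨N, fun k hk ↦ (lt_of_not_ge fun hNk ↦ hN k hNk hk).le⟩ hP
  exact ⟨K, hK, fun k hKk hk ↦ hKk.not_ge (hle k hk)⟩

end TailSums

section PowersOfSeries

lemma real_add_rpow_le_rpow_add_mul {a b p : ℝ} (hb : 0 ≤ b) (hab : 0 < a + b) (hp : 1 ≤ p) :
    (a + b) ^ p ≤ b ^ p + p * (a * (a + b) ^ (p - 1)) := by
  have bernoulli : 1 + p * -(a / (a + b)) ≤ (1 + -(a / (a + b))) ^ p :=
    one_add_mul_self_le_rpow_one_add
      (neg_le_neg ((div_le_one hab).2 (le_add_of_nonneg_right hb))) hp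
  have one_sub : 1 + -(a / (a + b)) = b / (a + b) := by field_simp; ring
  rw [one_sub, Real.div_rpow hb hab.le, le_div_iff₀ (by positivity)] at bernoulli
  have rpow_sub_one : (a + b) ^ (p - 1) = (a + b) ^ p / (a + b) := Real.rpow_sub_one hab.ne' p
  have expand : (1 + p * -(a / (a + b))) * (a + b) ^ p =
      (a + b) ^ p - p * (a * (a + b) ^ (p - 1)) := by
    rw [rpow_sub_one]; field_simp; ring
  linarith

lemma add_rpow_le_rpow_add_mul (a b : ℝ≥0∞) {p : ℝ} (hp : 1 ≤ p) :
    (a + b) ^ p ≤ b ^ p + ENNReal.ofReal p * (a * (a + b) ^ (p - 1)) := by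
  have hp0 : 0 < p := by linarith
  rcases eq_or_ne (a + b) 0 with hab | hab
  · simp [hab, hp0]
  rcases eq_or_ne b ⊤ with rfl | hb
  · simp [hp0]
  rcases eq_or_ne a ⊤ with rfl | ha
  · have top_rpow_ne_zero : (⊤ : ℝ≥0∞) ^ (p - 1) ≠ 0 := by simp [hp]
    simp [ENNReal.top_mul top_rpow_ne_zero, hp0]
  lift a to ℝ≥0 using ha
  lift b to ℝ≥0 using hb
  have hab' : (0 : ℝ) < a + b := by exact_mod_cast pos_iff_ne_zero.2 hab
  have real_ineq := real_add_rpow_le_rpow_add_mul b.coe_nonneg hab' hp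
  rw [← ENNReal.coe_add, ← ENNReal.coe_rpow_of_nonneg _ hp0.le,
    ← ENNReal.coe_rpow_of_nonneg _ hp0.le, ← ENNReal.coe_rpow_of_nonneg _ (sub_nonneg.2 hp),
    ENNReal.ofReal]
  norm_cast
  rw [← NNReal.coe_le_coe]
  push_cast
  rwa [Real.coe_toNNReal p hp0.le]

lemma tailSum_rpow_le {u : ℤ → ℝ≥0∞} {p : ℝ} (hp : 1 ≤ p) {K : ℤ} (hK : tailSum u K ≠ ⊤) :
    tailSum u K ^ p ≤ ENNReal.ofReal p * tailSum (fun k ↦ u k * tailSum u k ^ (p - 1)) K := by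
  have telescope (N : ℕ) : tailSum u K ^ p ≤
      ENNReal.ofReal p * ∑ i ∈ Finset.range N, u (K + i) * tailSum u (K + i) ^ (p - 1) +
        tailSum u (K + N) ^ p := by
    induction N with
    | zero => simp
    | succ N ih =>
      have step := add_rpow_le_rpow_add_mul (u (K + N)) (tailSum u (K + N + 1)) hp
      rw [← tailSum_eq_add_tailSum] at step
      calc tailSum u K ^ p ≤ _ := ih
        _ ≤ _ := add_le_add_right step _
        _ = _ := by
          rw [Finset.sum_range_succ]
          push_cast
          ring_nf
  have remainder : Tendsto (fun N : ℕ ↦ tailSum u (K + N) ^ p) atTop (𝓝 0) := by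
    have := ((tendsto_tailSum hK).comp
      (tendsto_atTop_add_const_left _ K tendsto_natCast_atTop_atTop)).ennrpow_const p
    simpa [ENNReal.zero_rpow_of_pos (zero_lt_one.trans_le hp)] using this
  refine ge_of_tendsto' (by simpa using remainder.const_add _) fun N ↦ (telescope N).trans ?_
  gcongr
  exact ENNReal.sum_le_tsum _

/-- At a scale `K` with `2 ^ (K * β) < tailSum u K`, the terms below `K` are absorbed by the tail;
past the last such scale every tail is at most `2 ^ (k * β)`, so the truncation is inactive. -/
lemma tsum_rpow_le_truncated {u : ℤ → ℝ≥0∞} {A : ℝ≥0∞} {β p : ℝ} (hβ : 0 < β) (hp : 1 ≤ p)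
    (hu : ∀ k : ℤ, u k ≤ A * 2 ^ (k * β)) (hfin : ∀ k, tailSum u k ≠ ⊤) :
    (∑' k, u k) ^ p ≤ (1 + A * ∑' i : ℕ, 2 ^ (-(i * β))) ^ p * ENNReal.ofReal p *
      ∑' k : ℤ, u k * (Iic ((A + 2 ^ β) * 2 ^ (k * β))).indicator (· ^ (p - 1)) (tailSum u k) := by
  have hp0 : 0 < p := by linarith
  rcases eq_or_ne (∑' k, u k) 0 with hzero | hpos
  · simp [hzero, hp0]
  obtain ⟨k₁, hk₁⟩ := exists_lt_tailSum u (pos_iff_ne_zero.2 hpos)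
  obtain ⟨k₂, hk₂, hlt⟩ := exists_two_rpow_mul_lt hβ hk₁.ne' k₁
  have eventually_small : ∀ᶠ k : ℤ in atTop, ¬(2 : ℝ≥0∞) ^ (k * β) < tailSum u k := by
    filter_upwards [ENNReal.tendsto_nhds_zero.1 (tendsto_tailSum (hfin 0)) 1 one_pos,
      eventually_gt_atTop 0] with k hk hk0
    exact (hk.trans (ENNReal.one_le_rpow one_le_two (by positivity))).not_gt
  obtain ⟨K, hK, hlast⟩ := exists_last_of_eventually_not
    ⟨k₂, hlt.trans_le (antitone_tailSum u hk₂)⟩ eventually_small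
  set G : ℝ≥0∞ := ∑' i : ℕ, 2 ^ (-(i * β))
  have tsum_le : ∑' k, u k ≤ (1 + A * G) * tailSum u K := by
    rw [add_mul, one_mul]
    exact (tsum_le_tailSum_add_of_le_two_rpow hβ.le hu K).trans (by gcongr)
  have tailSum_le {k : ℤ} (hk : K ≤ k) : tailSum u k ≤ (A + 2 ^ β) * 2 ^ (k * β) := by
    rw [tailSum_eq_add_tailSum, add_mul, ← two_rpow_add]
    refine add_le_add (hu k) ((not_lt.1 (hlast (k + 1) (by omega))).trans_eq ?_)
    push_cast
    ring_nf
  calc (∑' k, u k) ^ p ≤ ((1 + A * G) * tailSum u K) ^ p := by gcongr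
    _ = (1 + A * G) ^ p * tailSum u K ^ p := ENNReal.mul_rpow_of_nonneg _ _ hp0.le
    _ ≤ (1 + A * G) ^ p * (ENNReal.ofReal p * ∑' k : ℤ,
          u k * (Iic ((A + 2 ^ β) * 2 ^ (k * β))).indicator (· ^ (p - 1)) (tailSum u k)) := by
        gcongr
        refine (tailSum_rpow_le hp (hfin K)).trans ?_
        gcongr
        refine (tailSum_mono fun k hk ↦ ?_).trans (tailSum_le_tsum _ K)
        rw [indicator_of_mem (mem_Iic.2 (tailSum_le hk))]
    _ = _ := (mul_assoc _ _ _).symm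

lemma tsum_truncated_le_of_antitone {z : ℤ → ℝ≥0∞} (hz : Antitone z) {M : ℝ≥0∞} {β q : ℝ}
    (hq : 0 ≤ q) :
    ∑' k : ℤ, 2 ^ (-(k * (β * q))) * (Iic (M * 2 ^ (k * β))).indicator (· ^ q) (z k) ≤
      M ^ q * ∑' i : ℕ, 2 ^ (-(i * (β * q))) := by
  refine tsum_le_of_forall_tailSum_le fun k ↦ ENNReal.tsum_le_of_sum_range_le fun N ↦ ?_
  induction N generalizing k with
  | zero => simp
  | succ N ih =>
    by_cases hk : z k ≤ M * 2 ^ (k * β)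
    · refine (ENNReal.sum_le_tsum _).trans ?_
      rw [← ENNReal.tsum_mul_left]
      refine ENNReal.tsum_le_tsum fun i ↦ ?_
      calc 2 ^ (-((k + i : ℤ) * (β * q))) *
            (Iic (M * 2 ^ ((k + i : ℤ) * β))).indicator (· ^ q) (z (k + i))
          ≤ 2 ^ (-((k + i : ℤ) * (β * q))) * (M * 2 ^ (k * β)) ^ q := by
            gcongr
            refine (indicator_le_self' (fun _ _ ↦ zero_le) _).trans ?_
            exact ENNReal.rpow_le_rpow ((hz (by omega)).trans hk) hq
        _ = M ^ q * 2 ^ (-(i * (β * q))) := by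
            rw [ENNReal.mul_rpow_of_nonneg _ _ hq, ← ENNReal.rpow_mul, mul_left_comm,
              ← two_rpow_add]
            push_cast
            ring_nf
    · rw [Finset.sum_range_succ']
      simpa [hk, add_assoc, add_comm (1 : ℤ)] using ih (k + 1)

lemma tsum_mul_rpow_le {ι : Type*} {p : ℝ} (hp : 1 ≤ p) (a b : ι → ℝ≥0∞) :
    (∑' j, a j * b j) ^ p ≤ (∑' j, a j) ^ (p - 1) * ∑' j, a j * b j ^ p := by
  have hp0 : 0 < p := by linarith
  have conj_nonneg : 0 ≤ 1 - p⁻¹ := sub_nonneg.2 (inv_le_one_of_one_le₀ hp)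
  have holder : ∑' j, a j * b j ≤ (∑' j, a j) ^ (1 - p⁻¹) * (∑' j, a j * b j ^ p) ^ p⁻¹ := by
    rw [ENNReal.tsum_eq_iSup_sum (f := fun j ↦ a j * b j)]
    refine iSup_le fun s ↦ ?_
    refine (ENNReal.inner_le_weight_mul_Lp_of_nonneg s hp a b).trans ?_
    gcongr <;> exact ENNReal.sum_le_tsum s
  calc _ ≤ ((∑' j, a j) ^ (1 - p⁻¹) * (∑' j, a j * b j ^ p) ^ p⁻¹) ^ p := by gcongr
    _ = _ := by
      rw [ENNReal.mul_rpow_of_nonneg _ _ hp0.le, ← ENNReal.rpow_mul, ← ENNReal.rpow_mul,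
        inv_mul_cancel₀ hp0.ne', ENNReal.rpow_one, sub_mul, one_mul, inv_mul_cancel₀ hp0.ne']

end PowersOfSeries

section DyadicCubes

variable {n : ℕ}

/-- The index `m` of the half-open dyadic cube `∏ᵢ [mᵢ 2ᵏ, (mᵢ + 1) 2ᵏ)` of generation `k`
containing `x`. A dyadic cube is represented by the pair `(k, m)`. -/
noncomputable def dyadicIndex (k : ℤ) (x : EuclideanSpace ℝ (Fin n)) : Fin n → ℤ :=
  fun i ↦ ⌊x i / 2 ^ k⌋

/-- The index, in generation `k + 1`, of the dyadic cube containing the cube `m` of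
generation `k`. -/
def dyadicParent (m : Fin n → ℤ) : Fin n → ℤ := fun i ↦ m i / 2

/-- The cube `(k, m)` together with its `3 ^ n - 1` neighbours of the same generation, i.e. the
concentric cube of triple side length. Neighbours are the indices at sup distance at most `1`. -/
def dyadicTriple (k : ℤ) (m : Fin n → ℤ) : Set (EuclideanSpace ℝ (Fin n)) :=
  {y | dist m (dyadicIndex k y) ≤ 1}

lemma dyadicIndex_add_one (k : ℤ) (x : EuclideanSpace ℝ (Fin n)) :
    dyadicIndex (k + 1) x = dyadicParent (dyadicIndex k x) := by
  ext i
  rw [dyadicIndex, zpow_add_one₀ two_ne_zero, ← div_div]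
  exact_mod_cast Int.floor_div_natCast (x i / (2 : ℝ) ^ k) 2

lemma dyadicIndex_add_natCast (k : ℤ) (j : ℕ) (x : EuclideanSpace ℝ (Fin n)) :
    dyadicIndex (k + j) x = dyadicParent^[j] (dyadicIndex k x) := by
  induction j with
  | zero => simp
  | succ j ih =>
    rw [Function.iterate_succ_apply', ← ih, ← dyadicIndex_add_one, add_assoc, Nat.cast_succ]

lemma int_pi_dist_le_natCast_iff {m m' : Fin n → ℤ} {a : ℕ} :
    dist m m' ≤ a ↔ ∀ i, |m i - m' i| ≤ a := by
  simp only [dist_pi_le_iff (Nat.cast_nonneg a), Int.dist_eq, ← Int.cast_sub, ← Int.cast_abs]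
  norm_cast

lemma dist_dyadicParent_le_one {m m' : Fin n → ℤ} (h : dist m m' ≤ 2) :
    dist (dyadicParent m) (dyadicParent m') ≤ 1 := by
  have coords := (int_pi_dist_le_natCast_iff (a := 2)).1 (by exact_mod_cast h)
  refine mod_cast (int_pi_dist_le_natCast_iff (a := 1)).2 fun i ↦ ?_
  have := abs_le.1 (coords i)
  simp only [dyadicParent, abs_le]
  omega

lemma dist_iterate_dyadicParent_le_one {m m' : Fin n → ℤ} (h : dist m m' ≤ 1) (i : ℕ) :
    dist (dyadicParent^[i] m) (dyadicParent^[i] m') ≤ 1 := by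
  induction i with
  | zero => exact h
  | succ i ih =>
    simp only [Function.iterate_succ_apply']
    exact dist_dyadicParent_le_one (ih.trans one_le_two)

lemma dyadicTriple_subset_dyadicTriple_parent {m m' : Fin n → ℤ} (h : dist m m' ≤ 1) (k : ℤ) :
    dyadicTriple k m ⊆ dyadicTriple (k + 1) (dyadicParent m') := by
  intro y hy
  rw [dyadicTriple, mem_ofPred_eq, dyadicIndex_add_one]
  refine dist_dyadicParent_le_one ?_
  calc dist m' (dyadicIndex k y) ≤ dist m' m + dist m (dyadicIndex k y) := dist_triangle _ _ _
    _ ≤ 1 + 1 := add_le_add (by rwa [dist_comm]) hy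
    _ = 2 := one_add_one_eq_two

lemma measurable_dyadicIndex (k : ℤ) :
    Measurable (dyadicIndex k : EuclideanSpace ℝ (Fin n) → Fin n → ℤ) :=
  measurable_pi_lambda _ fun i ↦ Int.measurable_floor.comp
    (Measurable.div_const (by fun_prop) _)

lemma measurableSet_dyadicTriple (k : ℤ) (m : Fin n → ℤ) : MeasurableSet (dyadicTriple k m) :=
  measurable_dyadicIndex k (MeasurableSet.of_discrete (s := {m' | dist m m' ≤ 1}))

lemma dyadicTriple_eq_preimage_pi_Ico (k : ℤ) (m : Fin n → ℤ) :
    dyadicTriple k m = (MeasurableEquiv.toLp 2 (Fin n → ℝ)).symm ⁻¹'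
      univ.pi fun i ↦ Ico ((m i - 1) * (2 : ℝ) ^ k) ((m i + 2) * 2 ^ k) := by
  have side_pos : (0 : ℝ) < 2 ^ k := by positivity
  ext y
  have coords : dist m (dyadicIndex k y) ≤ 1 ↔ ∀ i, |m i - dyadicIndex k y i| ≤ 1 := by
    exact_mod_cast int_pi_dist_le_natCast_iff (a := 1)
  have floor_mem (i : Fin n) : |m i - dyadicIndex k y i| ≤ 1 ↔
      ((m i - 1 : ℤ) : ℝ) ≤ y i / 2 ^ k ∧ y i / 2 ^ k < (m i + 2 : ℤ) := by
    rw [← Int.le_floor, ← Int.floor_lt, abs_le, dyadicIndex]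
    omega
  simp only [dyadicTriple, mem_ofPred_eq, coords, floor_mem, le_div_iff₀ side_pos,
    div_lt_iff₀ side_pos]
  simp

lemma volume_dyadicTriple (k : ℤ) (m : Fin n → ℤ) :
    volume (dyadicTriple k m) = 3 ^ n * 2 ^ (k * n : ℝ) := by
  have side (i : Fin n) : (m i + 2) * (2 : ℝ) ^ k - (m i - 1) * 2 ^ k = 3 * 2 ^ k := by ring
  rw [dyadicTriple_eq_preimage_pi_Ico,
    (EuclideanSpace.volume_preserving_symm_measurableEquiv_toLp (Fin n)).measure_preimage
      (MeasurableSet.univ_pi fun _ ↦ measurableSet_Ico).nullMeasurableSet, volume_pi_pi]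
  simp only [Real.volume_Ico, side, Finset.prod_const, Finset.card_univ, Fintype.card_fin]
  rw [ENNReal.ofReal_mul zero_le_three, ← two_rpow_intCast, mul_pow, ENNReal.ofReal_ofNat,
    ENNReal.rpow_mul_natCast]

lemma ediam_dyadicIndex_preimage_le (k : ℤ) (m : Fin n → ℤ) :
    ediam (dyadicIndex k ⁻¹' {m}) ≤ (n : ℝ≥0∞) ^ (1 / 2 : ℝ) * 2 ^ (k : ℝ) := by
  have side_pos : (0 : ℝ) < 2 ^ k := by positivity
  refine ediam_le fun x hx y hy ↦ ?_
  have coord (i : Fin n) : edist (x i) (y i) ≤ 2 ^ (k : ℝ) := by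
    have same_floor : ⌊x i / 2 ^ k⌋ = ⌊y i / 2 ^ k⌋ :=
      congr_fun (hx.trans hy.symm : dyadicIndex k x = dyadicIndex k y) i
    have := Int.abs_sub_lt_one_of_floor_eq_floor same_floor
    rw [← sub_div, abs_div, abs_of_pos side_pos, div_lt_one side_pos] at this
    rw [edist_dist, Real.dist_eq, two_rpow_intCast]
    exact ENNReal.ofReal_le_ofReal this.le
  calc edist x y ≤ _ := PiLp.antilipschitzWith_ofLp 2 (fun _ : Fin n ↦ ℝ) x y
    _ ≤ (n : ℝ≥0∞) ^ (1 / 2 : ℝ) * 2 ^ (k : ℝ) := by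
      refine mul_le_mul' (by simp [ENNReal.coe_rpow_of_nonneg]) ?_
      exact edist_pi_le_iff.2 coord

lemma tsum_indicator_closedBall_one_le (a : Fin n → ℤ) {f : (Fin n → ℤ) → ℝ≥0∞} {B : ℝ≥0∞}
    (hf : ∀ m, dist m a ≤ 1 → f m ≤ B) :
    ∑' m, (closedBall a 1).indicator f m ≤ 3 ^ n * B := by
  classical
  have neighbours : closedBall a 1 =
      Fintype.piFinset fun i ↦ Finset.Icc (a i - 1) (a i + 1) := by
    ext m
    rw [mem_closedBall, show (1 : ℝ) = (1 : ℕ) by norm_num, int_pi_dist_le_natCast_iff]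
    simp only [Fintype.coe_piFinset, mem_univ_pi, Finset.coe_Icc, mem_Icc, abs_le]
    exact forall_congr' fun i ↦ by omega
  have card_Icc (i : Fin n) : (Finset.Icc (a i - 1) (a i + 1)).card = 3 := by
    rw [Int.card_Icc]
    omega
  calc ∑' m, (closedBall a 1).indicator f m
      = ∑ m ∈ Fintype.piFinset fun i ↦ Finset.Icc (a i - 1) (a i + 1), f m := by
        rw [neighbours, ← tsum_subtype, Finset.tsum_subtype']
    _ ≤ (Fintype.piFinset fun i ↦ Finset.Icc (a i - 1) (a i + 1)).card • B :=
        Finset.sum_le_card_nsmul _ _ _ fun m hm ↦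
          hf m (by rw [← mem_closedBall, neighbours]; exact hm)
    _ = 3 ^ n * B := by simp [Fintype.card_piFinset, card_Icc]

end DyadicCubes

section DyadicSums

variable {n : ℕ}

/-- A family of coefficients, one for each dyadic cube `(k, m)`. -/
abbrev DyadicCoeff (n : ℕ) : Type := ℤ → (Fin n → ℤ) → ℝ≥0∞

/-- The function `∑_Q c_Q 1_Q`, the sum being over all dyadic cubes. -/
noncomputable def dyadicSum (c : DyadicCoeff n) (x : EuclideanSpace ℝ (Fin n)) : ℝ≥0∞ :=
  ∑' k : ℤ, c k (dyadicIndex k x)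

/-- The sum `∑_Q c_Q ℓ(Q)^τ` over all dyadic cubes, where `ℓ(Q)` is the side length. It controls
the Choquet integral of `dyadicSum c` with respect to the `τ`-dimensional content. -/
noncomputable def dyadicCost (τ : ℝ) (c : DyadicCoeff n) : ℝ≥0∞ :=
  ∑' q : ℤ × (Fin n → ℤ), c q.1 q.2 * 2 ^ (q.1 * τ)

/-- The sum of the coefficients of all dyadic cubes containing the cube `(k, m)`. -/
noncomputable def ancestorSum (c : DyadicCoeff n) (k : ℤ) (m : Fin n → ℤ) : ℝ≥0∞ :=
  ∑' i : ℕ, c (k + i) (dyadicParent^[i] m)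

lemma dyadicSum_const_mul (a : ℝ≥0∞) (c : DyadicCoeff n) (x : EuclideanSpace ℝ (Fin n)) :
    dyadicSum (fun k m ↦ a * c k m) x = a * dyadicSum c x :=
  ENNReal.tsum_mul_left

lemma dyadicCost_const_mul (τ : ℝ) (a : ℝ≥0∞) (c : DyadicCoeff n) :
    dyadicCost τ (fun k m ↦ a * c k m) = a * dyadicCost τ c := by
  simp only [dyadicCost, mul_assoc, ENNReal.tsum_mul_left]

lemma dyadicSum_tsum {ι : Type*} (c : ι → DyadicCoeff n) (x : EuclideanSpace ℝ (Fin n)) :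
    dyadicSum (fun k m ↦ ∑' j, c j k m) x = ∑' j, dyadicSum (c j) x :=
  ENNReal.tsum_comm

lemma dyadicCost_tsum {ι : Type*} (τ : ℝ) (c : ι → DyadicCoeff n) :
    dyadicCost τ (fun k m ↦ ∑' j, c j k m) = ∑' j, dyadicCost τ (c j) := by
  simp only [dyadicCost, ← ENNReal.tsum_mul_right]
  exact ENNReal.tsum_comm

lemma ancestorSum_eq_add (c : DyadicCoeff n) (k : ℤ) (m : Fin n → ℤ) :
    ancestorSum c k m = c k m + ancestorSum c (k + 1) (dyadicParent m) := by
  rw [ancestorSum, tsum_eq_zero_add' ENNReal.summable, ancestorSum]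
  push_cast
  simp only [add_zero, add_assoc, add_comm (1 : ℤ), Function.iterate_succ_apply,
    Function.iterate_zero, id_eq]

lemma ancestorSum_dyadicIndex (c : DyadicCoeff n) (k : ℤ) (x : EuclideanSpace ℝ (Fin n)) :
    ancestorSum c k (dyadicIndex k x) = tailSum (fun j ↦ c j (dyadicIndex j x)) k := by
  simp only [ancestorSum, tailSum, dyadicIndex_add_natCast]

lemma coeff_le_dyadicCost_mul (τ : ℝ) (c : DyadicCoeff n) (k : ℤ) (m : Fin n → ℤ) :
    c k m ≤ dyadicCost τ c * 2 ^ (-(k * τ)) := by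
  calc c k m = c k m * 2 ^ (k * τ) * 2 ^ (-(k * τ)) := by
        rw [mul_assoc, ← two_rpow_add, add_neg_cancel, ENNReal.rpow_zero, mul_one]
    _ ≤ dyadicCost τ c * 2 ^ (-(k * τ)) := by
        gcongr
        exact ENNReal.le_tsum (f := fun q : ℤ × (Fin n → ℤ) ↦ c q.1 q.2 * 2 ^ (q.1 * τ)) (k, m)

end DyadicSums

section HausdorffContent

variable {X : Type*} [EMetricSpace X] {τ : ℝ}

lemma hContent_le_tsum_of_subset_iUnion {ι : Type*} [Countable ι] (hτ : 0 < τ) {S : Set X}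
    {c : ι → Set X} (h : S ⊆ ⋃ i, c i) : hContent τ S ≤ ∑' i, ediam (c i) ^ τ := by
  have := Encodable.ofCountable ι
  rw [← tsum_iUnion_decode₂ (fun s : Set X ↦ ediam s ^ τ) (by simp [hτ]) c]
  exact iInf₂_le _ (by rwa [Encodable.iUnion_decode₂])

lemma hContent_mono {S T : Set X} (h : S ⊆ T) : hContent τ S ≤ hContent τ T :=
  le_iInf₂ fun c hc ↦ iInf₂_le c (h.trans hc)

end HausdorffContent

section ChoquetIntegrals

variable {n : ℕ} {τ : ℝ}

lemma volume_ofReal_preimage_Ico_le (a c : ℝ≥0∞) :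
    volume (ENNReal.ofReal ⁻¹' Ico a (c + a) ∩ Ioi 0) ≤ c := by
  rcases eq_or_ne a ⊤ with rfl | ha
  · simp
  rcases eq_or_ne c ⊤ with rfl | hc
  · exact le_top
  calc volume (ENNReal.ofReal ⁻¹' Ico a (c + a) ∩ Ioi 0)
      ≤ volume (Ico a.toReal (c.toReal + a.toReal)) := by
        refine measure_mono ?_
        rintro t ⟨⟨hat, htc⟩, ht : 0 < t⟩
        rw [← ENNReal.toReal_add hc ha]
        exact ⟨ENNReal.toReal_le_of_le_ofReal ht.le hat,
          (ENNReal.ofReal_lt_iff_lt_toReal ht.le (ENNReal.add_ne_top.2 ⟨hc, ha⟩)).1 htc⟩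
    _ = c := by simp [hc]

lemma exists_mem_Ico_ancestorSum (hτ : 0 < τ) {c : DyadicCoeff n} (hc : dyadicCost τ c ≠ ⊤)
    {t : ℝ≥0∞} (ht : 0 < t) {x : EuclideanSpace ℝ (Fin n)} (hx : t < dyadicSum c x) :
    ∃ k, t ∈ Ico (ancestorSum c (k + 1) (dyadicParent (dyadicIndex k x)))
      (ancestorSum c k (dyadicIndex k x)) := by
  have tail_ne_top : tailSum (fun j ↦ c j (dyadicIndex j x)) 0 ≠ ⊤ :=
    tailSum_ne_top_of_le_two_rpow hc hτ (fun k ↦ coeff_le_dyadicCost_mul τ c k _) 0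
  obtain ⟨K, hK, hlast⟩ := exists_last_of_eventually_not (exists_lt_tailSum _ hx)
    ((ENNReal.tendsto_nhds_zero.1 (tendsto_tailSum tail_ne_top) t ht).mono fun _ ↦ not_lt.2)
  refine ⟨K, ?_, ?_⟩
  · rw [← dyadicIndex_add_one, ancestorSum_dyadicIndex]
    exact not_lt.1 (hlast (K + 1) (by omega))
  · rwa [ancestorSum_dyadicIndex]

lemma hContent_lt_dyadicSum_le (hτ : 0 < τ) {c : DyadicCoeff n} (hc : dyadicCost τ c ≠ ⊤)
    {t : ℝ≥0∞} (ht : 0 < t) :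
    hContent τ {x | t < dyadicSum c x} ≤ ∑' q : ℤ × (Fin n → ℤ),
      (Ico (ancestorSum c (q.1 + 1) (dyadicParent q.2)) (ancestorSum c q.1 q.2)).indicator
        (fun _ ↦ ((n : ℝ≥0∞) ^ (1 / 2 : ℝ) * 2 ^ (q.1 : ℝ)) ^ τ) t := by
  set I : ℤ × (Fin n → ℤ) → Set ℝ≥0∞ := fun q ↦
    Ico (ancestorSum c (q.1 + 1) (dyadicParent q.2)) (ancestorSum c q.1 q.2)
  have cover : {x | t < dyadicSum c x} ⊆
      ⋃ q : ℤ × (Fin n → ℤ), {x | dyadicIndex q.1 x = q.2 ∧ t ∈ I q} := fun x hx ↦ by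
    obtain ⟨k, hk⟩ := exists_mem_Ico_ancestorSum hτ hc ht hx
    exact mem_iUnion.2 ⟨(k, dyadicIndex k x), rfl, hk⟩
  refine (hContent_le_tsum_of_subset_iUnion hτ cover).trans (ENNReal.tsum_le_tsum fun q ↦ ?_)
  by_cases htq : t ∈ I q
  · rw [indicator_of_mem htq]
    simp only [htq, and_true]
    exact ENNReal.rpow_le_rpow (ediam_dyadicIndex_preimage_le q.1 q.2) hτ.le
  · simp [htq, hτ]

lemma lintegral_hContent_lt_dyadicSum_le (hτ : 0 < τ) {c : DyadicCoeff n}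
    (hc : dyadicCost τ c ≠ ⊤) :
    ∫⁻ t in Ioi (0 : ℝ), hContent τ {x | ENNReal.ofReal t < dyadicSum c x} ≤
      (n : ℝ≥0∞) ^ (τ / 2) * dyadicCost τ c := by
  set I : ℤ × (Fin n → ℤ) → Set ℝ := fun q ↦ ENNReal.ofReal ⁻¹'
    Ico (ancestorSum c (q.1 + 1) (dyadicParent q.2)) (ancestorSum c q.1 q.2)
  set d : ℤ × (Fin n → ℤ) → ℝ≥0∞ := fun q ↦ ((n : ℝ≥0∞) ^ (1 / 2 : ℝ) * 2 ^ (q.1 : ℝ)) ^ τ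
  have measurableSet_I (q) : MeasurableSet (I q) := ENNReal.measurable_ofReal measurableSet_Ico
  have volume_I_le (q) : volume (I q ∩ Ioi 0) ≤ c q.1 q.2 := by
    simp only [I, ancestorSum_eq_add c q.1]
    exact volume_ofReal_preimage_Ico_le _ _
  have d_eq (q) : d q = (n : ℝ≥0∞) ^ (τ / 2) * 2 ^ (q.1 * τ) := by
    simp only [d, ENNReal.mul_rpow_of_nonneg _ _ hτ.le, ← ENNReal.rpow_mul]
    ring_nf
  calc ∫⁻ t in Ioi (0 : ℝ), hContent τ {x | ENNReal.ofReal t < dyadicSum c x}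
      ≤ ∫⁻ t in Ioi (0 : ℝ), ∑' q, (I q).indicator (fun _ ↦ d q) t :=
        setLIntegral_mono' measurableSet_Ioi fun t ht ↦
          hContent_lt_dyadicSum_le hτ hc (ENNReal.ofReal_pos.2 ht)
    _ = ∑' q, d q * volume (I q ∩ Ioi 0) := by
        rw [lintegral_tsum fun q ↦
          (measurable_const.indicator (measurableSet_I q)).aemeasurable]
        simp only [lintegral_indicator_const (measurableSet_I _),
          Measure.restrict_apply (measurableSet_I _)]
    _ ≤ ∑' q : ℤ × (Fin n → ℤ), (n : ℝ≥0∞) ^ (τ / 2) * (c q.1 q.2 * 2 ^ (q.1 * τ)) :=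
        ENNReal.tsum_le_tsum fun q ↦ by
          rw [d_eq, mul_assoc, mul_comm (c q.1 q.2)]
          gcongr
          exact volume_I_le q
    _ = (n : ℝ≥0∞) ^ (τ / 2) * dyadicCost τ c := ENNReal.tsum_mul_left

lemma lintegral_hContent_rpow_le_of_rpow_le_dyadicSum (hτ : 0 < τ) {p : ℝ} (hp : 0 < p)
    {F : EuclideanSpace ℝ (Fin n) → ℝ≥0∞} {c : DyadicCoeff n} (hc : dyadicCost τ c ≠ ⊤)
    {B : ℝ≥0∞} (hB : B ≠ ⊤) (hF : ∀ x, F x ^ p ≤ B * dyadicSum c x) :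
    ∫⁻ t in Ioi (0 : ℝ), hContent τ {x | ENNReal.ofReal (t ^ (1 / p)) ≤ F x} ≤
      (n : ℝ≥0∞) ^ (τ / 2) * (2 * B * dyadicCost τ c) := by
  have cost_ne_top : dyadicCost τ (fun k m ↦ 2 * B * c k m) ≠ ⊤ := by
    rw [dyadicCost_const_mul]
    exact ENNReal.mul_ne_top (ENNReal.mul_ne_top ENNReal.ofNat_ne_top hB) hc
  rw [← dyadicCost_const_mul]
  refine (setLIntegral_mono' measurableSet_Ioi fun t (ht : 0 < t) ↦
    hContent_mono fun x hx ↦ ?_).trans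
      (lintegral_hContent_lt_dyadicSum_le hτ cost_ne_top)
  calc ENNReal.ofReal t < 2 * ENNReal.ofReal t := by
        rw [two_mul]
        exact ENNReal.lt_add_right ENNReal.ofReal_ne_top (ENNReal.ofReal_pos.2 ht).ne'
    _ = 2 * ENNReal.ofReal (t ^ (1 / p)) ^ p := by
        rw [← ENNReal.ofReal_rpow_of_pos ht, ← ENNReal.rpow_mul, one_div_mul_cancel hp.ne',
          ENNReal.rpow_one]
    _ ≤ 2 * (B * dyadicSum c x) := by
        gcongr
        exact (ENNReal.rpow_le_rpow hx hp.le).trans (hF x)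
    _ = dyadicSum (fun k m ↦ 2 * B * c k m) x := by rw [dyadicSum_const_mul, mul_assoc]

end ChoquetIntegrals

section RieszCoefficients

variable {n : ℕ} {β : ℝ} {μ : Measure (EuclideanSpace ℝ (Fin n))}

/-- The coefficients `ℓ(Q)^{β - n} μ(3Q)`. Their `dyadicSum` is the dyadic model of the Riesz
potential of order `β` of the measure `μ`. -/
noncomputable def rieszCoeff (β : ℝ) (μ : Measure (EuclideanSpace ℝ (Fin n))) : DyadicCoeff n :=
  fun k m ↦ 2 ^ (k * (β - n)) * μ (dyadicTriple k m)

/-- The coefficients `c_Q (∑_{R ⊇ Q} c_R)^q` with `c = rieszCoeff β μ`, replaced by `0` on the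
cubes where the sum over the ancestors of `Q` exceeds `L * ℓ(Q)^β`. -/
noncomputable def truncatedRieszCoeff (β q : ℝ) (L : ℝ≥0∞)
    (μ : Measure (EuclideanSpace ℝ (Fin n))) : DyadicCoeff n :=
  fun k m ↦ rieszCoeff β μ k m *
    (Iic (L * 2 ^ (k * β))).indicator (· ^ q) (ancestorSum (rieszCoeff β μ) k m)

lemma rieszCoeff_le_parent (k : ℤ) {m m' : Fin n → ℤ} (h : dist m m' ≤ 1) :
    rieszCoeff β μ k m ≤ 2 ^ (n - β) * rieszCoeff β μ (k + 1) (dyadicParent m') := by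
  have scale : (2 : ℝ≥0∞) ^ (n - β) * 2 ^ ((k + 1 : ℤ) * (β - n)) = 2 ^ (k * (β - n)) := by
    rw [← two_rpow_add]
    push_cast
    ring_nf
  rw [rieszCoeff, rieszCoeff, ← mul_assoc, scale]
  gcongr
  exact dyadicTriple_subset_dyadicTriple_parent h k

lemma ancestorSum_rieszCoeff_le_parent (k : ℤ) {m m' : Fin n → ℤ} (h : dist m m' ≤ 1) :
    ancestorSum (rieszCoeff β μ) k m ≤
      2 ^ (n - β) * ancestorSum (rieszCoeff β μ) (k + 1) (dyadicParent m') := by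
  rw [ancestorSum, ancestorSum, ← ENNReal.tsum_mul_left]
  refine ENNReal.tsum_le_tsum fun i ↦ ?_
  have := rieszCoeff_le_parent (β := β) (μ := μ) (k + i) (dist_iterate_dyadicParent_le_one h i)
  rwa [← Function.iterate_succ_apply' dyadicParent, Function.iterate_succ_apply,
    add_right_comm] at this

lemma rieszCoeff_le_two_rpow (hμ : μ ≤ volume) (k : ℤ) (m : Fin n → ℤ) :
    rieszCoeff β μ k m ≤ 3 ^ n * 2 ^ (k * β) := by
  calc rieszCoeff β μ k m ≤ 2 ^ (k * (β - n)) * (3 ^ n * 2 ^ (k * n : ℝ)) := by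
        rw [rieszCoeff, ← volume_dyadicTriple k m]
        gcongr
    _ = 3 ^ n * 2 ^ (k * β) := by
        rw [mul_left_comm, ← two_rpow_add]
        ring_nf

lemma rieszCoeff_le_measure_univ_mul (k : ℤ) (m : Fin n → ℤ) :
    rieszCoeff β μ k m ≤ μ univ * 2 ^ (-(k * (n - β))) := by
  rw [rieszCoeff, mul_comm, ← mul_neg, neg_sub]
  gcongr
  exact subset_univ _

lemma dyadicSum_rieszCoeff_rpow_le [IsFiniteMeasure μ] (hμ : μ ≤ volume) (hβ : 0 < β)
    (hβn : β < n) {p : ℝ} (hp : 1 ≤ p) (x : EuclideanSpace ℝ (Fin n)) :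
    dyadicSum (rieszCoeff β μ) x ^ p ≤
      (1 + 3 ^ n * ∑' i : ℕ, 2 ^ (-(i * β))) ^ p * ENNReal.ofReal p *
        dyadicSum (truncatedRieszCoeff β (p - 1) (3 ^ n + 2 ^ β) μ) x := by
  simp only [dyadicSum, truncatedRieszCoeff, ancestorSum_dyadicIndex]
  exact tsum_rpow_le_truncated hβ hp (fun k ↦ rieszCoeff_le_two_rpow hμ k _) <|
    tailSum_ne_top_of_le_two_rpow (measure_ne_top μ univ) (sub_pos.2 hβn)
      fun k ↦ rieszCoeff_le_measure_univ_mul k _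

lemma dyadicCost_rieszCoeff_mul (τ : ℝ) (W : DyadicCoeff n) :
    dyadicCost τ (fun k m ↦ rieszCoeff β μ k m * W k m) =
      ∫⁻ y, ∑' k : ℤ, 2 ^ (k * (β - n + τ)) *
        ∑' m, (closedBall (dyadicIndex k y) 1).indicator (W k) m ∂μ := by
  have summand (q : ℤ × (Fin n → ℤ)) : rieszCoeff β μ q.1 q.2 * W q.1 q.2 * 2 ^ (q.1 * τ) =
      ∫⁻ y, (dyadicTriple q.1 q.2).indicator
        (fun _ ↦ 2 ^ (q.1 * (β - n + τ)) * W q.1 q.2) y ∂μ := by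
    rw [lintegral_indicator_const (measurableSet_dyadicTriple _ _), rieszCoeff, mul_add,
      two_rpow_add]
    ring
  rw [dyadicCost, tsum_congr summand, ← lintegral_tsum fun q ↦
    (measurable_const.indicator (measurableSet_dyadicTriple _ _)).aemeasurable]
  refine lintegral_congr fun y ↦ ?_
  rw [ENNReal.tsum_prod']
  simp only [← ENNReal.tsum_mul_left]
  refine tsum_congr fun k ↦ tsum_congr fun m ↦ ?_
  by_cases hm : dist m (dyadicIndex k y) ≤ 1 <;> simp [dyadicTriple, hm]

lemma truncation_le_of_dist_le_one {q : ℝ} (hq : 0 ≤ q) (L : ℝ≥0∞) {k : ℤ}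
    {y : EuclideanSpace ℝ (Fin n)} {m : Fin n → ℤ} (hm : dist m (dyadicIndex k y) ≤ 1) :
    (Iic (L * 2 ^ (k * β))).indicator (· ^ q) (ancestorSum (rieszCoeff β μ) k m) ≤
      2 ^ ((n - β) * q) * (Iic (2 ^ (n - β) * L * 2 ^ (k * β))).indicator (· ^ q)
        (tailSum (fun j ↦ rieszCoeff β μ j (dyadicIndex j y)) (k + 1)) := by
  set z := tailSum (fun j ↦ rieszCoeff β μ j (dyadicIndex j y)) (k + 1) with hz
  rw [← ancestorSum_dyadicIndex, dyadicIndex_add_one] at hz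
  by_cases hle : ancestorSum (rieszCoeff β μ) k m ≤ L * 2 ^ (k * β)
  swap
  · simp [hle]
  have z_le : z ≤ 2 ^ (n - β) * L * 2 ^ (k * β) := by
    calc z ≤ ancestorSum (rieszCoeff β μ) k (dyadicIndex k y) := by
          rw [hz, ancestorSum_eq_add _ k]
          exact le_add_self
      _ ≤ 2 ^ (n - β) * ancestorSum (rieszCoeff β μ) (k + 1) (dyadicParent m) :=
          ancestorSum_rieszCoeff_le_parent k (by rwa [dist_comm])
      _ ≤ 2 ^ (n - β) * ancestorSum (rieszCoeff β μ) k m := by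
          gcongr
          rw [ancestorSum_eq_add _ k]
          exact le_add_self
      _ ≤ 2 ^ (n - β) * L * 2 ^ (k * β) := by
          rw [mul_assoc]
          gcongr
  rw [indicator_of_mem (mem_Iic.2 hle), indicator_of_mem (mem_Iic.2 z_le), ENNReal.rpow_mul,
    ← ENNReal.mul_rpow_of_nonneg _ _ hq, hz]
  exact ENNReal.rpow_le_rpow (ancestorSum_rieszCoeff_le_parent k hm) hq

lemma dyadicCost_truncatedRieszCoeff_le {q : ℝ} (hq : 0 ≤ q) (L : ℝ≥0∞) :
    dyadicCost (n - β * (q + 1)) (truncatedRieszCoeff β q L μ) ≤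
      3 ^ n * 2 ^ ((n - β) * q) * ((2 ^ (n - β) * L) ^ q * ∑' i : ℕ, 2 ^ (-(i * (β * q)))) *
        μ univ := by
  unfold truncatedRieszCoeff
  rw [dyadicCost_rieszCoeff_mul, ← lintegral_const]
  refine lintegral_mono fun y ↦ ?_
  set z : ℤ → ℝ≥0∞ := fun k ↦ tailSum (fun j ↦ rieszCoeff β μ j (dyadicIndex j y)) (k + 1)
  have antitone_z : Antitone z := fun j k hjk ↦ antitone_tailSum _ (by omega)
  refine le_trans ?_ (mul_le_mul_right
    (tsum_truncated_le_of_antitone antitone_z (M := 2 ^ (n - β) * L) (β := β) hq) _)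
  rw [← ENNReal.tsum_mul_left]
  refine ENNReal.tsum_le_tsum fun k ↦ ?_
  refine (mul_le_mul_right (tsum_indicator_closedBall_one_le _ fun m hm ↦
    truncation_le_of_dist_le_one hq L hm) _).trans_eq ?_
  rw [show (k : ℝ) * (β - n + (n - β * (q + 1))) = -(k * (β * q)) by ring]
  ring

lemma exists_dyadicSum_rieszCoeff_rpow_le (hβ : 0 < β) (hβn : β < n) {p : ℝ} (hp : 1 < p) :
    ∃ C ≠ ⊤, ∀ (μ : Measure (EuclideanSpace ℝ (Fin n))) [IsFiniteMeasure μ], μ ≤ volume →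
      ∃ c : DyadicCoeff n, (∀ x, dyadicSum (rieszCoeff β μ) x ^ p ≤ dyadicSum c x) ∧
        dyadicCost (n - β * p) c ≤ C * μ univ := by
  have hq : 0 < p - 1 := sub_pos.2 hp
  set L : ℝ≥0∞ := 3 ^ n + 2 ^ β
  have hL : L ≠ ⊤ := by finiteness
  have geometric_ne_top : ∑' i : ℕ, (2 : ℝ≥0∞) ^ (-(i * β)) ≠ ⊤ := tsum_two_rpow_neg_mul_ne_top hβ
  have geometric_ne_top' : ∑' i : ℕ, (2 : ℝ≥0∞) ^ (-(i * (β * (p - 1)))) ≠ ⊤ :=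
    tsum_two_rpow_neg_mul_ne_top (mul_pos hβ hq)
  set A : ℝ≥0∞ := (1 + 3 ^ n * ∑' i : ℕ, 2 ^ (-(i * β))) ^ p * ENNReal.ofReal p
  set B : ℝ≥0∞ := 3 ^ n * 2 ^ ((n - β) * (p - 1)) *
    ((2 ^ (n - β) * L) ^ (p - 1) * ∑' i : ℕ, 2 ^ (-(i * (β * (p - 1)))))
  refine ⟨A * B, by finiteness, fun μ _ hμ ↦
    ⟨fun k m ↦ A * truncatedRieszCoeff β (p - 1) L μ k m, fun x ↦ ?_, ?_⟩⟩
  · rw [dyadicSum_const_mul]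
    exact dyadicSum_rieszCoeff_rpow_le hμ hβ hβn hp.le x
  · rw [dyadicCost_const_mul, mul_assoc A]
    gcongr
    simpa only [sub_add_cancel] using dyadicCost_truncatedRieszCoeff_le (μ := μ) (β := β) hq.le L

end RieszCoefficients

section WeightedCombination

variable {n : ℕ} {ι : Type*} {p : ℝ}

lemma tsum_mul_rpow_le_of_rpow_le (hp : 1 ≤ p) (b : ι → ℝ≥0∞) {w f F : ι → ℝ≥0∞}
    (hw : ∀ j, w j ≠ ⊤) (hf : ∀ j, f j ^ p ≤ F j) (hF : ∀ j, w j = 0 → F j = 0) :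
    (∑' j, b j * f j) ^ p ≤
      (∑' j, b j * w j ^ (1 / p)) ^ (p - 1) * ∑' j, b j * w j ^ (1 / p) * (w j)⁻¹ * F j := by
  have hp0 : 0 < p := zero_lt_one.trans_le hp
  have normalize (j : ι) : f j = w j ^ (1 / p) * (f j * (w j ^ (1 / p))⁻¹) := by
    by_cases hwj : w j = 0
    · have hfj : f j ^ p ≤ 0 := hF j hwj ▸ hf j
      rw [nonpos_iff_eq_zero, ENNReal.rpow_eq_zero_iff_of_pos hp0] at hfj
      simp [hfj]
    · rw [mul_left_comm, ENNReal.mul_inv_cancel, mul_one]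
      · simp [hwj, hw j]
      · exact ENNReal.rpow_ne_top_of_nonneg (by positivity) (hw j)
  calc (∑' j, b j * f j) ^ p
      = (∑' j, b j * w j ^ (1 / p) * (f j * (w j ^ (1 / p))⁻¹)) ^ p := by
        congr 1
        refine tsum_congr fun j ↦ ?_
        rw [mul_assoc, ← normalize j]
    _ ≤ (∑' j, b j * w j ^ (1 / p)) ^ (p - 1) *
          ∑' j, b j * w j ^ (1 / p) * (f j * (w j ^ (1 / p))⁻¹) ^ p := tsum_mul_rpow_le hp _ _
    _ ≤ _ := by
        gcongr _ * ?_
        refine ENNReal.tsum_le_tsum fun j ↦ ?_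
        rw [ENNReal.mul_rpow_of_nonneg _ _ hp0.le, ENNReal.inv_rpow, ← ENNReal.rpow_mul,
          one_div_mul_cancel hp0.ne', ENNReal.rpow_one, mul_assoc _ (w j)⁻¹, mul_comm (w j)⁻¹]
        gcongr
        exact hf j

lemma dyadicCost_combination_le (hp : 1 ≤ p) (τ : ℝ) {K : ℝ≥0∞} (b : ι → ℝ≥0∞) {w : ι → ℝ≥0∞}
    {c : ι → DyadicCoeff n} (hc : ∀ j, dyadicCost τ (c j) ≤ K * w j) :
    dyadicCost τ (fun k m ↦ (∑' j, b j * w j ^ (1 / p)) ^ (p - 1) *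
        ∑' j, b j * w j ^ (1 / p) * (w j)⁻¹ * c j k m) ≤
      K * (∑' j, b j * w j ^ (1 / p)) ^ p := by
  set S := ∑' j, b j * w j ^ (1 / p) with hS
  rw [dyadicCost_const_mul, dyadicCost_tsum]
  simp only [dyadicCost_const_mul]
  calc S ^ (p - 1) * ∑' j, b j * w j ^ (1 / p) * (w j)⁻¹ * dyadicCost τ (c j)
      ≤ S ^ (p - 1) * ∑' j, K * (b j * w j ^ (1 / p)) := by
        gcongr S ^ (p - 1) * ?_
        refine ENNReal.tsum_le_tsum fun j ↦ ?_
        calc b j * w j ^ (1 / p) * (w j)⁻¹ * dyadicCost τ (c j)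
            ≤ b j * w j ^ (1 / p) * (w j)⁻¹ * (K * w j) := by
              gcongr
              exact hc j
          _ = K * (b j * w j ^ (1 / p)) * ((w j)⁻¹ * w j) := by ring
          _ ≤ K * (b j * w j ^ (1 / p)) := mul_le_of_le_one_right' (ENNReal.inv_mul_le_one _)
    _ = K * (S ^ (p - 1) * S ^ (1 : ℝ)) := by
        rw [ENNReal.tsum_mul_left, ← hS, ENNReal.rpow_one, mul_left_comm]
    _ = K * S ^ p := by
        rw [← ENNReal.rpow_add_of_nonneg _ _ (sub_nonneg.2 hp) zero_le_one, sub_add_cancel]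

lemma exists_tsum_mul_rpow_le_dyadicSum (hp : 1 ≤ p) {τ : ℝ} {K : ℝ≥0∞} (b : ι → ℝ≥0∞)
    {w : ι → ℝ≥0∞} (hw : ∀ j, w j ≠ ⊤) {f : ι → EuclideanSpace ℝ (Fin n) → ℝ≥0∞}
    (hf : ∀ j, ∃ c : DyadicCoeff n,
      (∀ x, f j x ^ p ≤ dyadicSum c x) ∧ dyadicCost τ c ≤ K * w j) :
    ∃ c : DyadicCoeff n, (∀ x, (∑' j, b j * f j x) ^ p ≤ dyadicSum c x) ∧
      dyadicCost τ c ≤ K * (∑' j, b j * w j ^ (1 / p)) ^ p := by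
  choose c f_le cost_le using hf
  refine ⟨_, fun x ↦ ?_, dyadicCost_combination_le hp τ b cost_le⟩
  rw [dyadicSum_const_mul, dyadicSum_tsum]
  simp only [dyadicSum_const_mul]
  refine tsum_mul_rpow_le_of_rpow_le hp b hw (f_le · x) fun j hwj ↦ ?_
  have cost_eq_zero : dyadicCost τ (c j) = 0 := by simpa [hwj] using cost_le j
  refine ENNReal.tsum_eq_zero.2 fun k ↦ ?_
  simpa [cost_eq_zero] using coeff_le_dyadicCost_mul τ (c j) k (dyadicIndex k x)

end WeightedCombination

section PowerKernel

variable {s : ℝ}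

lemma rpow_neg_le_two_rpow_mul (hs : 0 ≤ s) {a b : ℝ≥0∞} (h : a ≤ 2 * b) :
    b ^ (-s) ≤ 2 ^ s * a ^ (-s) := by
  have rpow_le : a ^ s ≤ 2 ^ s * b ^ s := by
    rw [← ENNReal.mul_rpow_of_nonneg _ _ hs]
    gcongr
  calc b ^ (-s) = 2 ^ s * (2 ^ s * b ^ s)⁻¹ := by
        rw [ENNReal.mul_inv (.inl (two_rpow_ne_zero s)) (.inl (two_rpow_ne_top s)), ← mul_assoc,
          ENNReal.mul_inv_cancel (two_rpow_ne_zero s) (two_rpow_ne_top s), one_mul,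
          ENNReal.rpow_neg]
    _ ≤ 2 ^ s * a ^ (-s) := by
        rw [ENNReal.rpow_neg]
        gcongr

variable {E : Type*} [NormedAddCommGroup E] [MeasurableSpace E] [BorelSpace E] (μ : Measure E)

lemma lintegral_ball_enorm_sub_rpow_neg_le_of_far (hs : 0 ≤ s) {x y : E} {r : ℝ}
    (h : 2 * r ≤ ‖y - x‖) :
    ∫⁻ z in ball x r, ‖y - z‖ₑ ^ (-s) ∂μ ≤ 2 ^ s * ‖y - x‖ₑ ^ (-s) * μ (ball x r) := by
  rw [← setLIntegral_const]
  refine setLIntegral_mono' measurableSet_ball fun z hz ↦ rpow_neg_le_two_rpow_mul hs ?_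
  have norm_le : ‖y - x‖ ≤ 2 * ‖y - z‖ := by
    have := norm_sub_le_norm_sub_add_norm_sub y z x
    rw [mem_ball_iff_norm] at hz
    linarith
  simpa [ENNReal.ofReal_mul] using ENNReal.ofReal_le_ofReal norm_le

variable [NormedSpace ℝ E] [FiniteDimensional ℝ E] [μ.IsAddHaarMeasure]

lemma lintegral_ball_enorm_rpow_neg_ne_top (hs : 0 ≤ s) (hsE : s < Module.finrank ℝ E) (r : ℝ) :
    ∫⁻ w in ball (0 : E) r, ‖w‖ₑ ^ (-s) ∂μ ≠ ⊤ := by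
  have finrank_pos : 0 < Module.finrank ℝ E := by exact_mod_cast hs.trans_lt hsE
  have : Nontrivial E := Module.nontrivial_of_finrank_pos (R := ℝ) finrank_pos
  have integrable : IntegrableOn (fun w : E ↦ ‖w‖ ^ (-s)) (ball 0 r) μ := by
    refine integrableOn_ball_of_norm_le_rpow (C := 1) finrank_pos hsE
      (Eventually.of_forall fun w ↦ ?_) (measurable_norm.pow_const _).aestronglyMeasurable
    rw [Real.norm_of_nonneg (by positivity), one_mul]
  refine ne_top_of_le_ne_top integrable.2.ne (lintegral_mono_ae ?_)
  filter_upwards [ae_restrict_of_ae (Measure.ae_ne μ (0 : E))] with w hw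
  have norm_pos : 0 < ‖w‖ := norm_pos_iff.2 hw
  rw [Real.enorm_of_nonneg (by positivity), ← ENNReal.ofReal_rpow_of_pos norm_pos, ofReal_norm]

lemma lintegral_ball_zero_eq_lintegral_ball_one {f : E → ℝ≥0∞} (hf : Measurable f) {r : ℝ}
    (hr : 0 < r) :
    ∫⁻ w in ball (0 : E) r, f w ∂μ =
      ENNReal.ofReal (r ^ Module.finrank ℝ E) * ∫⁻ w in ball (0 : E) 1, f (r • w) ∂μ := by
  have preimage_ball : (r • ·) ⁻¹' ball (0 : E) r = ball 0 1 := by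
    ext w
    simp [norm_smul, abs_of_pos hr, hr]
  rw [← preimage_ball, ← setLIntegral_map measurableSet_ball hf (measurable_const_smul r),
    Measure.map_addHaar_smul μ hr.ne', Measure.restrict_smul, lintegral_smul_measure, smul_eq_mul,
    ← mul_assoc, ← ENNReal.ofReal_mul (by positivity), abs_of_pos (by positivity),
    mul_inv_cancel₀ (by positivity), ENNReal.ofReal_one, one_mul]

lemma lintegral_ball_enorm_rpow_neg {r : ℝ} (hr : 0 < r) :
    ∫⁻ w in ball (0 : E) r, ‖w‖ₑ ^ (-s) ∂μ =
      (∫⁻ w in ball (0 : E) 1, ‖w‖ₑ ^ (-s) ∂μ) / μ (ball 0 1) * ENNReal.ofReal r ^ (-s) *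
        μ (ball 0 r) := by
  have volume_ball : μ (ball (0 : E) r) =
      ENNReal.ofReal (r ^ Module.finrank ℝ E) * μ (ball 0 1) := by
    simpa using Measure.addHaar_ball_mul_of_pos μ (0 : E) hr 1
  have hB0 : μ (ball (0 : E) 1) ≠ 0 := (measure_ball_pos μ _ one_pos).ne'
  have enorm_smul_rpow (w : E) :
      ‖r • w‖ₑ ^ (-s) = ENNReal.ofReal r ^ (-s) * ‖w‖ₑ ^ (-s) := by
    rw [enorm_smul, Real.enorm_of_nonneg hr.le,
      ENNReal.mul_rpow_of_ne_top ENNReal.ofReal_ne_top enorm_ne_top]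
  rw [lintegral_ball_zero_eq_lintegral_ball_one μ (by fun_prop) hr]
  simp only [enorm_smul_rpow]
  rw [lintegral_const_mul _ (by fun_prop), volume_ball]
  conv_lhs => rw [← ENNReal.div_mul_cancel (b := lintegral _ _) hB0 measure_ball_lt_top.ne]
  ring

lemma lintegral_ball_enorm_sub_rpow_neg (y : E) (r : ℝ) :
    ∫⁻ z in ball y r, ‖y - z‖ₑ ^ (-s) ∂μ = ∫⁻ w in ball (0 : E) r, ‖w‖ₑ ^ (-s) ∂μ := by
  have preimage_ball : (y - ·) ⁻¹' ball 0 r = ball y r := by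
    ext z
    rw [mem_preimage, mem_ball_zero_iff, mem_ball_iff_norm']
  rw [← preimage_ball]
  exact (μ.measurePreserving_sub_left y).setLIntegral_comp_preimage measurableSet_ball
    (f := fun w ↦ ‖w‖ₑ ^ (-s)) (by fun_prop)

lemma lintegral_ball_enorm_sub_rpow_neg_le_of_near (hs : 0 ≤ s) {x y : E} {r : ℝ} (hr : 0 < r)
    (h : ‖y - x‖ ≤ 2 * r) :
    ∫⁻ z in ball x r, ‖y - z‖ₑ ^ (-s) ∂μ ≤
      (∫⁻ w in ball (0 : E) 1, ‖w‖ₑ ^ (-s) ∂μ) / μ (ball 0 1) *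
        (2 ^ s * ‖y - x‖ₑ ^ (-s)) * (3 ^ Module.finrank ℝ E * μ (ball x r)) := by
  have ball_subset : ball x r ⊆ ball y (3 * r) :=
    ball_subset_ball' (by rw [dist_eq_norm_sub']; linarith)
  have enorm_le : ‖y - x‖ₑ ≤ 2 * ENNReal.ofReal (3 * r) := by
    rw [← ofReal_norm, ← ENNReal.ofReal_ofNat 2, ← ENNReal.ofReal_mul zero_le_two]
    exact ENNReal.ofReal_le_ofReal (by linarith)
  have volume_ball : μ (ball 0 (3 * r)) = 3 ^ Module.finrank ℝ E * μ (ball x r) := by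
    rw [Measure.addHaar_ball_mul_of_pos μ _ three_pos, ← Measure.addHaar_ball_center μ x,
      ENNReal.ofReal_pow zero_le_three, ENNReal.ofReal_ofNat]
  refine (lintegral_mono_set ball_subset).trans ?_
  rw [lintegral_ball_enorm_sub_rpow_neg, lintegral_ball_enorm_rpow_neg μ (by positivity),
    volume_ball]
  gcongr
  exact rpow_neg_le_two_rpow_mul hs enorm_le

lemma exists_lintegral_ball_enorm_sub_rpow_neg_le (hs : 0 ≤ s) (hsE : s < Module.finrank ℝ E) :
    ∃ C ≠ ⊤, ∀ (x y : E) (r : ℝ), 0 < r →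
      ∫⁻ z in ball x r, ‖y - z‖ₑ ^ (-s) ∂μ ≤ C * ‖y - x‖ₑ ^ (-s) * μ (ball x r) := by
  set A := (∫⁻ w in ball (0 : E) 1, ‖w‖ₑ ^ (-s) ∂μ) / μ (ball 0 1)
  have hA : A ≠ ⊤ := ENNReal.div_ne_top (lintegral_ball_enorm_rpow_neg_ne_top μ hs hsE 1)
    (measure_ball_pos μ _ one_pos).ne'
  refine ⟨2 ^ s + A * 2 ^ s * 3 ^ Module.finrank ℝ E, by finiteness, fun x y r hr ↦ ?_⟩
  rcases le_total (2 * r) ‖y - x‖ with far | near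
  · refine (lintegral_ball_enorm_sub_rpow_neg_le_of_far μ hs far).trans ?_
    gcongr
    exact le_self_add
  · refine (lintegral_ball_enorm_sub_rpow_neg_le_of_near μ hs hr near).trans ?_
    calc A * (2 ^ s * ‖y - x‖ₑ ^ (-s)) * (3 ^ Module.finrank ℝ E * μ (ball x r))
        = A * 2 ^ s * 3 ^ Module.finrank ℝ E * ‖y - x‖ₑ ^ (-s) * μ (ball x r) := by ring
      _ ≤ _ := by
        gcongr
        exact le_add_self

end PowerKernel

section RieszPotential

variable {n : ℕ} {β : ℝ}

lemma enorm_rieszPot_le (hβn : β < n) (g : EuclideanSpace ℝ (Fin n) → ℝ)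
    (z : EuclideanSpace ℝ (Fin n)) :
    ‖rieszPot β g z‖ₑ ≤ ∫⁻ y, ‖g y‖ₑ * ‖y - z‖ₑ ^ (-(n - β)) := by
  refine (enorm_integral_le_lintegral_enorm _).trans (lintegral_mono fun y ↦ ?_)
  rcases (norm_nonneg (y - z)).eq_or_lt with norm_eq_zero | norm_pos
  · simp [← norm_eq_zero, Real.zero_rpow (sub_pos.2 hβn).ne']
  · rw [div_eq_mul_inv, enorm_mul, ← Real.rpow_neg norm_pos.le,
      Real.enorm_of_nonneg (Real.rpow_nonneg norm_pos.le _), ← ENNReal.ofReal_rpow_of_pos norm_pos,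
      ofReal_norm]

lemma exists_maxFn_rieszPot_le (hβ : 0 < β) (hβn : β < n) :
    ∃ C ≠ ⊤, ∀ g : EuclideanSpace ℝ (Fin n) → ℝ, Measurable g → ∀ x,
      maxFn (fun z ↦ ‖rieszPot β g z‖ₑ) x ≤ C * ∫⁻ y, ‖g y‖ₑ * ‖y - x‖ₑ ^ (-(n - β)) := by
  obtain ⟨C, hC, average_le⟩ := exists_lintegral_ball_enorm_sub_rpow_neg_le
    (volume : Measure (EuclideanSpace ℝ (Fin n))) (sub_pos.2 hβn).le (by simpa using hβ)
  refine ⟨C, hC, fun g hg x ↦ iSup₂_le fun r hr ↦ ENNReal.div_le_of_le_mul ?_⟩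
  calc ∫⁻ z in ball x r, ‖rieszPot β g z‖ₑ
      ≤ ∫⁻ z in ball x r, ∫⁻ y, ‖g y‖ₑ * ‖y - z‖ₑ ^ (-(n - β)) :=
        lintegral_mono (enorm_rieszPot_le hβn g)
    _ = ∫⁻ y, ∫⁻ z in ball x r, ‖g y‖ₑ * ‖y - z‖ₑ ^ (-(n - β)) :=
        lintegral_lintegral_swap (by fun_prop)
    _ = ∫⁻ y, ‖g y‖ₑ * ∫⁻ z in ball x r, ‖y - z‖ₑ ^ (-(n - β)) :=
        lintegral_congr fun y ↦ lintegral_const_mul _ (by fun_prop)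
    _ ≤ ∫⁻ y, C * volume (ball x r) * (‖g y‖ₑ * ‖y - x‖ₑ ^ (-(n - β))) := by
        refine lintegral_mono fun y ↦ (mul_le_mul_right (average_le x y r hr) _).trans_eq ?_
        ring
    _ = C * (∫⁻ y, ‖g y‖ₑ * ‖y - x‖ₑ ^ (-(n - β))) * volume (ball x r) := by
        rw [lintegral_const_mul _ (by fun_prop), mul_right_comm]

lemma abs_floor_sub_floor_le_one {a b : ℝ} (h : |a - b| ≤ 1) : |⌊a⌋ - ⌊b⌋| ≤ 1 := by
  rw [abs_sub_le_iff] at h ⊢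
  constructor
  · rw [sub_le_iff_le_add', ← Int.floor_add_one]
    exact Int.floor_le_floor (by linarith)
  · rw [sub_le_iff_le_add', ← Int.floor_add_one]
    exact Int.floor_le_floor (by linarith)

lemma mem_dyadicTriple_dyadicIndex_of_norm_sub_le {k : ℤ} {x y : EuclideanSpace ℝ (Fin n)}
    (h : ‖y - x‖ ≤ 2 ^ k) : y ∈ dyadicTriple k (dyadicIndex k x) := by
  rw [dyadicTriple, mem_ofPred_eq, ← Nat.cast_one, int_pi_dist_le_natCast_iff]
  intro i
  have abs_le_one : |x i / (2 : ℝ) ^ k - y i / (2 : ℝ) ^ k| ≤ 1 := by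
    rw [← sub_div, abs_div, abs_of_pos (by positivity : (0 : ℝ) < 2 ^ k), abs_sub_comm,
      div_le_one (by positivity)]
    exact (PiLp.norm_apply_le (y - x) i).trans h
  exact_mod_cast abs_floor_sub_floor_le_one abs_le_one

lemma enorm_sub_rpow_neg_le_tsum {s : ℝ} (hs : 0 ≤ s) {x y : EuclideanSpace ℝ (Fin n)}
    (hxy : y ≠ x) :
    ‖y - x‖ₑ ^ (-s) ≤ 2 ^ s * ∑' k : ℤ,
      (dyadicTriple k (dyadicIndex k x)).indicator (fun _ ↦ (2 : ℝ≥0∞) ^ (-(k * s))) y := by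
  obtain ⟨k, lt_norm, norm_le⟩ :=
    exists_mem_Ioc_zpow (norm_pos_iff.2 (sub_ne_zero.2 hxy)) one_lt_two
  have enorm_ge : (2 : ℝ≥0∞) ^ ((k + 1 : ℤ) : ℝ) ≤ 2 * ‖y - x‖ₑ := by
    rw [Int.cast_add, two_rpow_add, two_rpow_intCast, Int.cast_one, ENNReal.rpow_one, mul_comm,
      ← ofReal_norm]
    gcongr
  refine (rpow_neg_le_two_rpow_mul hs enorm_ge).trans ?_
  gcongr
  refine le_trans ?_ (ENNReal.le_tsum (k + 1))
  rw [indicator_of_mem (mem_dyadicTriple_dyadicIndex_of_norm_sub_le norm_le), ← ENNReal.rpow_mul,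
    mul_neg]

lemma lintegral_enorm_sub_rpow_le_dyadicSum (hβn : β ≤ n) (μ : Measure (EuclideanSpace ℝ (Fin n)))
    [NullSingletonClass μ] (x : EuclideanSpace ℝ (Fin n)) :
    ∫⁻ y, ‖y - x‖ₑ ^ (-(n - β)) ∂μ ≤ 2 ^ (n - β) * dyadicSum (rieszCoeff β μ) x := by
  have measurable_summand (k : ℤ) : Measurable ((dyadicTriple k (dyadicIndex k x)).indicator
      (fun _ ↦ (2 : ℝ≥0∞) ^ (-(k * (n - β))))) :=
    measurable_const.indicator (measurableSet_dyadicTriple _ _)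
  calc ∫⁻ y, ‖y - x‖ₑ ^ (-(n - β)) ∂μ
      ≤ ∫⁻ y, 2 ^ (n - β) * ∑' k : ℤ, (dyadicTriple k (dyadicIndex k x)).indicator
          (fun _ ↦ (2 : ℝ≥0∞) ^ (-(k * (n - β)))) y ∂μ := by
        refine lintegral_mono_ae ?_
        filter_upwards [Measure.ae_ne μ x] with y hy
        exact enorm_sub_rpow_neg_le_tsum (sub_nonneg.2 hβn) hy
    _ = 2 ^ (n - β) * dyadicSum (rieszCoeff β μ) x := by
        rw [lintegral_const_mul _ (.tsum measurable_summand),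
          lintegral_tsum fun k ↦ (measurable_summand k).aemeasurable]
        simp only [lintegral_indicator_const (measurableSet_dyadicTriple _ _), ← mul_neg, neg_sub]
        rfl

end RieszPotential

section LevelSets

/-- The superlevel set `{|g| > 2^j}`, in terms of which `g` and its Lorentz norm are decomposed
dyadically. -/
def dyadicLevelSet {α : Type*} (g : α → ℝ) (j : ℤ) : Set α := {y | (2 : ℝ) ^ j < |g y|}

lemma enorm_le_tsum_dyadicLevelSet {α : Type*} (g : α → ℝ) (y : α) :
    ‖g y‖ₑ ≤ 2 * ∑' j : ℤ, (dyadicLevelSet g j).indicator (fun _ ↦ (2 : ℝ≥0∞) ^ (j : ℝ)) y := by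
  rcases eq_or_ne (g y) 0 with g_eq_zero | g_ne_zero
  · simp [g_eq_zero]
  obtain ⟨j, lt_abs, abs_le⟩ := exists_mem_Ioc_zpow (abs_pos.2 g_ne_zero) one_lt_two
  calc ‖g y‖ₑ ≤ ENNReal.ofReal (2 ^ (j + 1)) := by
        rw [Real.enorm_eq_ofReal_abs]
        gcongr
    _ = 2 * (dyadicLevelSet g j).indicator (fun _ ↦ (2 : ℝ≥0∞) ^ (j : ℝ)) y := by
        rw [indicator_of_mem (show y ∈ dyadicLevelSet g j from lt_abs), ← two_rpow_intCast,
          Int.cast_add, two_rpow_add, Int.cast_one, ENNReal.rpow_one, mul_comm]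
    _ ≤ _ := by
        gcongr
        exact ENNReal.le_tsum j

lemma lintegral_enorm_mul_le_tsum_dyadicLevelSet {α : Type*} [MeasurableSpace α] (μ : Measure α)
    {g : α → ℝ} (hg : Measurable g) {f : α → ℝ≥0∞} (hf : Measurable f) :
    ∫⁻ y, ‖g y‖ₑ * f y ∂μ ≤
      2 * ∑' j : ℤ, 2 ^ (j : ℝ) * ∫⁻ y in dyadicLevelSet g j, f y ∂μ := by
  have measurableSet_level (j : ℤ) : MeasurableSet (dyadicLevelSet g j) :=
    measurableSet_lt measurable_const (by fun_prop)
  have measurable_summand (j : ℤ) :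
      Measurable fun y ↦ (2 : ℝ≥0∞) ^ (j : ℝ) * (dyadicLevelSet g j).indicator f y :=
    (hf.indicator (measurableSet_level j)).const_mul _
  calc ∫⁻ y, ‖g y‖ₑ * f y ∂μ
      ≤ ∫⁻ y, 2 * ∑' j : ℤ, 2 ^ (j : ℝ) * (dyadicLevelSet g j).indicator f y ∂μ := by
        refine lintegral_mono fun y ↦
          (mul_le_mul_left (enorm_le_tsum_dyadicLevelSet g y) _).trans_eq ?_
        rw [mul_assoc, ← ENNReal.tsum_mul_right]
        congr 1
        refine tsum_congr fun j ↦ ?_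
        by_cases hy : y ∈ dyadicLevelSet g j <;> simp [hy]
    _ = 2 * ∑' j : ℤ, 2 ^ (j : ℝ) * ∫⁻ y in dyadicLevelSet g j, f y ∂μ := by
        rw [lintegral_const_mul _ (.tsum measurable_summand),
          lintegral_tsum fun j ↦ (measurable_summand j).aemeasurable]
        congr 1
        refine tsum_congr fun j ↦ ?_
        rw [lintegral_const_mul _ (hf.indicator (measurableSet_level j)),
          lintegral_indicator (measurableSet_level j)]

lemma two_rpow_mul_le_lintegral_of_antitone {φ : ℝ → ℝ≥0∞} (hφ : Antitone φ) (j : ℤ) :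
    2 ^ (j : ℝ) * φ (2 ^ (j + 1)) ≤ ∫⁻ t in Ioc ((2 : ℝ) ^ j) (2 ^ (j + 1)), φ t := by
  have volume_Ioc : volume (Ioc ((2 : ℝ) ^ j) (2 ^ (j + 1))) = 2 ^ (j : ℝ) := by
    rw [Real.volume_Ioc, two_rpow_intCast, zpow_add_one₀ two_ne_zero, mul_two, add_sub_cancel_right]
  rw [mul_comm, ← volume_Ioc, ← setLIntegral_const]
  exact setLIntegral_mono' measurableSet_Ioc fun t ht ↦ hφ ht.2

lemma tsum_two_rpow_mul_le_lintegral_of_antitone {φ : ℝ → ℝ≥0∞} (hφ : Antitone φ) :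
    ∑' j : ℤ, 2 ^ (j : ℝ) * φ (2 ^ j) ≤ 2 * ∫⁻ t in Ioi (0 : ℝ), φ t := by
  have disjoint_Ioc : Pairwise (Function.onFun Disjoint
      fun j : ℤ ↦ Ioc ((2 : ℝ) ^ j) (2 ^ (j + 1))) :=
    (zpow_right_mono₀ one_le_two).pairwise_disjoint_on_Ioc_succ
  calc ∑' j : ℤ, (2 : ℝ≥0∞) ^ (j : ℝ) * φ (2 ^ j)
      = ∑' j : ℤ, (2 : ℝ≥0∞) ^ ((j + 1 : ℤ) : ℝ) * φ (2 ^ (j + 1)) :=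
        ((Equiv.addRight (1 : ℤ)).tsum_eq fun j : ℤ ↦ (2 : ℝ≥0∞) ^ (j : ℝ) * φ (2 ^ j)).symm
    _ = 2 * ∑' j : ℤ, 2 ^ (j : ℝ) * φ (2 ^ (j + 1)) := by
        simp only [Int.cast_add, Int.cast_one, two_rpow_add, ENNReal.rpow_one, ← mul_assoc,
          mul_comm _ (2 : ℝ≥0∞), ← ENNReal.tsum_mul_left]
    _ ≤ 2 * ∑' j : ℤ, ∫⁻ t in Ioc ((2 : ℝ) ^ j) (2 ^ (j + 1)), φ t := by
        gcongr with j
        exact two_rpow_mul_le_lintegral_of_antitone hφ j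
    _ = 2 * ∫⁻ t in ⋃ j : ℤ, Ioc ((2 : ℝ) ^ j) (2 ^ (j + 1)), φ t := by
        rw [lintegral_iUnion (fun _ ↦ measurableSet_Ioc) disjoint_Ioc]
    _ ≤ 2 * ∫⁻ t in Ioi (0 : ℝ), φ t := by
        gcongr
        exact iUnion_subset fun j t ht ↦ (zpow_pos two_pos j).trans ht.1

variable {n : ℕ} {p : ℝ} {g : EuclideanSpace ℝ (Fin n) → ℝ}

lemma tsum_two_rpow_mul_volume_dyadicLevelSet_le (hp : 0 ≤ p)
    (g : EuclideanSpace ℝ (Fin n) → ℝ) :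
    ∑' j : ℤ, 2 ^ (j : ℝ) * volume (dyadicLevelSet g j) ^ (1 / p) ≤ 2 * lorentzNorm p g := by
  refine tsum_two_rpow_mul_le_lintegral_of_antitone
    (φ := fun t ↦ volume {x | t < |g x|} ^ (1 / p)) fun t u htu ↦ ?_
  have superlevel_subset : {x | u < |g x|} ⊆ {x | t < |g x|} := fun x hx ↦ htu.trans_lt hx
  exact ENNReal.rpow_le_rpow (measure_mono superlevel_subset) (one_div_nonneg.2 hp)

lemma volume_dyadicLevelSet_ne_top (hp : 0 < p) (hg : lorentzNorm p g ≠ ⊤) (j : ℤ) :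
    volume (dyadicLevelSet g j) ≠ ⊤ := by
  have tsum_ne_top := ne_top_of_le_ne_top (by finiteness)
    (tsum_two_rpow_mul_volume_dyadicLevelSet_le hp.le g)
  intro volume_eq_top
  refine ENNReal.ne_top_of_tsum_ne_top tsum_ne_top j ?_
  rw [volume_eq_top, ENNReal.top_rpow_of_pos (one_div_pos.2 hp),
    ENNReal.mul_top (two_rpow_ne_zero _)]

end LevelSets

section Main

variable {n : ℕ} {β p : ℝ}

lemma exists_maxFn_rieszPot_le_tsum_dyadicSum (hβ : 0 < β) (hβn : β < n) :
    ∃ A ≠ ⊤, ∀ g : EuclideanSpace ℝ (Fin n) → ℝ, Measurable g → ∀ x,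
      maxFn (fun z ↦ ‖rieszPot β g z‖ₑ) x ≤ A * ∑' j : ℤ, 2 ^ (j : ℝ) *
        dyadicSum (rieszCoeff β (volume.restrict (dyadicLevelSet g j))) x := by
  have : Nonempty (Fin n) := Fin.pos_iff_nonempty.1 (by exact_mod_cast hβ.trans hβn)
  obtain ⟨C, hC, maxFn_le⟩ := exists_maxFn_rieszPot_le hβ hβn
  refine ⟨C * (2 * 2 ^ (n - β)), by finiteness, fun g hg x ↦ (maxFn_le g hg x).trans ?_⟩
  rw [mul_assoc, mul_assoc, ← ENNReal.tsum_mul_left]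
  gcongr C * ?_
  refine (lintegral_enorm_mul_le_tsum_dyadicLevelSet volume hg (by fun_prop)).trans ?_
  gcongr 2 * ?_
  refine ENNReal.tsum_le_tsum fun j ↦ ?_
  rw [mul_left_comm]
  gcongr
  exact lintegral_enorm_sub_rpow_le_dyadicSum hβn.le _ x

lemma exists_maxFn_rieszPot_rpow_le_dyadicSum (hβ : 0 < β) (hβn : β < n) (hp : 1 < p) :
    ∃ B ≠ ⊤, ∃ K ≠ ⊤, ∀ g : EuclideanSpace ℝ (Fin n) → ℝ, Measurable g → lorentzNorm p g ≠ ⊤ →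
      ∃ c : DyadicCoeff n, (∀ x, maxFn (fun z ↦ ‖rieszPot β g z‖ₑ) x ^ p ≤ B * dyadicSum c x) ∧
        dyadicCost (n - β * p) c ≤ K * lorentzNorm p g ^ p := by
  have hp0 : 0 < p := zero_lt_one.trans hp
  obtain ⟨A, hA, maxFn_le⟩ := exists_maxFn_rieszPot_le_tsum_dyadicSum hβ hβn
  obtain ⟨C, hC, exists_majorant⟩ := exists_dyadicSum_rieszCoeff_rpow_le hβ hβn hp
  refine ⟨A ^ p, by finiteness, C * 2 ^ p, by finiteness, fun g hg norm_ne_top ↦ ?_⟩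
  have level_ne_top := volume_dyadicLevelSet_ne_top hp0 norm_ne_top
  obtain ⟨c, rpow_le, cost_le⟩ := exists_tsum_mul_rpow_le_dyadicSum hp.le
    (fun j : ℤ ↦ 2 ^ (j : ℝ)) level_ne_top fun j ↦ by
      have : IsFiniteMeasure (volume.restrict (dyadicLevelSet g j)) :=
        isFiniteMeasure_restrict.2 (level_ne_top j)
      simpa only [Measure.restrict_apply_univ] using
        exists_majorant (volume.restrict (dyadicLevelSet g j)) Measure.restrict_le_self
  refine ⟨c, fun x ↦ ?_, cost_le.trans ?_⟩
  · calc maxFn (fun z ↦ ‖rieszPot β g z‖ₑ) x ^ p ≤ (A * _) ^ p :=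
          ENNReal.rpow_le_rpow (maxFn_le g hg x) hp0.le
      _ ≤ A ^ p * dyadicSum c x := by
          rw [ENNReal.mul_rpow_of_nonneg _ _ hp0.le]
          gcongr
          exact rpow_le x
  · rw [mul_assoc, ← ENNReal.mul_rpow_of_nonneg _ _ hp0.le]
    gcongr
    exact tsum_two_rpow_mul_volume_dyadicLevelSet_le hp0.le g

end Main

/-- The limiting-case (`s = p`) Choquet-integral estimate for the maximal function of the
Riesz potential, with the Lorentz `L^{p,1}` norm on the right-hand side. -/
theorem choquet_estimate_lorentz {n : ℕ} (β p : ℝ) (hβ : 0 < β) (hp : 1 < p)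
    (hτ : 0 < (n : ℝ) - β * p) :
    ∃ C : ℝ, 0 < C ∧ ∀ g : EuclideanSpace ℝ (Fin n) → ℝ,
      Measurable g → lorentzNorm p g ≠ ⊤ →
      ∫⁻ t in Set.Ioi (0 : ℝ),
          hContent ((n : ℝ) - β * p)
            {x | ENNReal.ofReal (t ^ (1 / p)) ≤
              maxFn (fun y => (‖rieszPot β g y‖₊ : ℝ≥0∞)) x}
        ≤ ENNReal.ofReal C * (lorentzNorm p g) ^ p := by
  have hβn : β < n := by nlinarith
  obtain ⟨B, hB, K, hK, exists_majorant⟩ :=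
    exists_maxFn_rieszPot_rpow_le_dyadicSum (n := n) hβ hβn hp
  set C : ℝ≥0∞ := (n : ℝ≥0∞) ^ (((n : ℝ) - β * p) / 2) * (2 * B * K)
  have hC : C ≠ ⊤ := by finiteness
  refine ⟨C.toReal + 1, by positivity, fun g hg norm_ne_top ↦ ?_⟩
  obtain ⟨c, maxFn_le, cost_le⟩ := exists_majorant g hg norm_ne_top
  have cost_ne_top : dyadicCost (n - β * p) c ≠ ⊤ := ne_top_of_le_ne_top (by finiteness) cost_le
  calc _ ≤ (n : ℝ≥0∞) ^ (((n : ℝ) - β * p) / 2) * (2 * B * dyadicCost (n - β * p) c) :=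
        lintegral_hContent_rpow_le_of_rpow_le_dyadicSum hτ (zero_lt_one.trans hp) cost_ne_top hB
          maxFn_le
    _ ≤ C * lorentzNorm p g ^ p := by
        rw [mul_assoc _ (2 * B * K), mul_assoc _ K]
        gcongr
    _ ≤ ENNReal.ofReal (C.toReal + 1) * lorentzNorm p g ^ p := by
        gcongr
        exact ENNReal.le_ofReal_iff_toReal_le hC (by positivity) |>.2 (lt_add_one _).le
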